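/- arXiv:math/0407268 — 5 statements merged into one kernel-verified Lean document; each statement's English description precedes it below -/
import Mathlib

section
/- For every τ in the upper half-plane and all x, y ∈ ℂ, the Jacobi theta functions satisfy the product identity θ₃(x,τ)·θ₄(y,τ) = θ₄(x+y, 2τ)·θ₄(x−y, 2τ) − θ₁(x+y, 2τ)·θ₁(x−y, 2τ). -/
open Complex

/-- Jacobi theta function θ₁(z,τ), with nome `q = exp(iπτ)`. -/
noncomputable def theta1 (z τ : ℂ) : ℂ :=
  -I * ∑' n : ℤ, (-1 : ℂ) ^ n * Complex.exp ((Real.pi : ℂ) * I * τ * ((n : ℂ) + 1 / 2) ^ 2) *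
    Complex.exp (I * (2 * (n : ℂ) + 1) * z)

/-- Jacobi theta function θ₂(z,τ), with nome `q = exp(iπτ)`. -/
noncomputable def theta2 (z τ : ℂ) : ℂ :=
  ∑' n : ℤ, Complex.exp ((Real.pi : ℂ) * I * τ * ((n : ℂ) + 1 / 2) ^ 2) *
    Complex.exp (I * (2 * (n : ℂ) + 1) * z)

/-- Jacobi theta function θ₃(z,τ), with nome `q = exp(iπτ)`. -/
noncomputable def theta3 (z τ : ℂ) : ℂ :=
  ∑' n : ℤ, Complex.exp ((Real.pi : ℂ) * I * τ * (n : ℂ) ^ 2) *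
    Complex.exp (2 * I * (n : ℂ) * z)

/-- Jacobi theta function θ₄(z,τ), with nome `q = exp(iπτ)`. -/
noncomputable def theta4 (z τ : ℂ) : ℂ :=
  ∑' n : ℤ, (-1 : ℂ) ^ n * Complex.exp ((Real.pi : ℂ) * I * τ * (n : ℂ) ^ 2) *
    Complex.exp (2 * I * (n : ℂ) * z)

lemma summable_exp_sq_mul_exp {τ : ℂ} (hτ : 0 < τ.im) (z : ℂ) :
    Summable fun n : ℤ => Complex.exp ((Real.pi : ℂ) * I * τ * (n : ℂ) ^ 2) *
      Complex.exp (2 * I * (n : ℂ) * z) := by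
  refine ((summable_jacobiTheta₂_term_iff (z / Real.pi) τ).2 hτ).congr fun n => ?_
  have hpi : (Real.pi : ℂ) ≠ 0 := by exact_mod_cast Real.pi_ne_zero
  rw [jacobiTheta₂_term, ← Complex.exp_add]
  congr 1
  field_simp
  ring

lemma summable_neg_one_zpow_mul {f : ℤ → ℂ} (hf : Summable f) :
    Summable fun n : ℤ => (-1 : ℂ) ^ n * f n :=
  Summable.of_norm (hf.norm.congr fun n => by simp)

lemma summable_theta4 {τ : ℂ} (hτ : 0 < τ.im) (z : ℂ) :
    Summable fun n : ℤ => (-1 : ℂ) ^ n * Complex.exp ((Real.pi : ℂ) * I * τ * (n : ℂ) ^ 2) *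
      Complex.exp (2 * I * (n : ℂ) * z) :=
  (summable_neg_one_zpow_mul (summable_exp_sq_mul_exp hτ z)).congr fun n => by ring

lemma summable_theta1 {τ : ℂ} (hτ : 0 < τ.im) (z : ℂ) :
    Summable fun n : ℤ => (-1 : ℂ) ^ n *
      Complex.exp ((Real.pi : ℂ) * I * τ * ((n : ℂ) + 1 / 2) ^ 2) *
      Complex.exp (I * (2 * (n : ℂ) + 1) * z) := by
  refine ((summable_theta4 hτ (z + Real.pi * τ / 2)).mul_left
    (Complex.exp (Real.pi * I * τ / 4 + I * z))).congr fun n => ?_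
  rw [mul_assoc ((-1 : ℂ) ^ n), mul_assoc ((-1 : ℂ) ^ n), mul_left_comm, ← Complex.exp_add,
    ← Complex.exp_add, ← Complex.exp_add]
  congr 2
  ring

lemma hasSum_mul_of_summable {f g : ℤ → ℂ} (hf : Summable f) (hg : Summable g) :
    HasSum (fun p : ℤ × ℤ => f p.1 * g p.2) ((∑' n, f n) * ∑' n, g n) :=
  hf.hasSum.mul hg.hasSum (summable_mul_of_summable_norm hf.norm hg.norm)

/-- Splitting a sum over `ℤ × ℤ` according to the parity of the sum of the coordinates. -/
lemma HasSum.of_parity_split {f : ℤ × ℤ → ℂ} {a b : ℂ}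
    (ha : HasSum (fun p : ℤ × ℤ => f (p.1 + p.2, p.1 - p.2)) a)
    (hb : HasSum (fun p : ℤ × ℤ => f (p.1 + p.2 + 1, p.1 - p.2)) b) :
    HasSum f (a + b) := by
  have even_injective : Function.Injective fun p : ℤ × ℤ => (p.1 + p.2, p.1 - p.2) := by
    rintro ⟨j, k⟩ ⟨j', k'⟩ h
    simp only [Prod.mk.injEq] at h ⊢
    lia
  have odd_injective : Function.Injective fun p : ℤ × ℤ => (p.1 + p.2 + 1, p.1 - p.2) := by
    rintro ⟨j, k⟩ ⟨j', k'⟩ h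
    simp only [Prod.mk.injEq] at h ⊢
    lia
  refine HasSum.add_isCompl ?_ (even_injective.hasSum_range_iff.2 ha)
    (odd_injective.hasSum_range_iff.2 hb)
  constructor
  · rw [Set.disjoint_iff_forall_ne]
    rintro _ ⟨⟨j, k⟩, rfl⟩ _ ⟨⟨j', k'⟩, rfl⟩ h
    simp only [Prod.mk.injEq] at h
    lia
  · rw [codisjoint_iff_le_sup]
    rintro ⟨n, m⟩ -
    rcases Int.even_or_odd' (n + m) with ⟨j, h | h⟩
    · exact Or.inl ⟨(j, n - j), Prod.ext (by lia) (by lia)⟩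
    · exact Or.inr ⟨(j, n - j - 1), Prod.ext (by lia) (by lia)⟩

lemma neg_one_zpow_sub (j k : ℤ) : (-1 : ℂ) ^ (j - k) = (-1) ^ j * (-1) ^ k := by
  rw [zpow_sub₀ (by norm_num), div_eq_mul_inv, ← inv_zpow, inv_neg_one]

theorem theta_product_identity (τ : ℂ) (hτ : 0 < τ.im) (x y : ℂ) :
    theta3 x τ * theta4 y τ =
      theta4 (x + y) (2 * τ) * theta4 (x - y) (2 * τ) -
        theta1 (x + y) (2 * τ) * theta1 (x - y) (2 * τ) := by
  have hτ' : 0 < (2 * τ).im := by simpa using hτ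
  have h34 := hasSum_mul_of_summable (summable_exp_sq_mul_exp hτ x) (summable_theta4 hτ y)
  have h44 := hasSum_mul_of_summable (summable_theta4 hτ' (x + y)) (summable_theta4 hτ' (x - y))
  have h11 := hasSum_mul_of_summable (summable_theta1 hτ' (x + y)) (summable_theta1 hτ' (x - y))
  have mul_exp (s t a b c d : ℂ) : s * exp a * exp b * (t * exp c * exp d) =
      s * t * exp (a + b + c + d) := by
    simp only [Complex.exp_add]
    ring
  have exp_mul (s a b c d : ℂ) : exp a * exp b * (s * exp c * exp d) =
      s * exp (a + b + c + d) := by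
    simp only [Complex.exp_add]
    ring
  have key := h34.unique <| HasSum.of_parity_split
    (h44.congr_fun fun p => by
      simp only [mul_exp, exp_mul, neg_one_zpow_sub]
      congr 2
      push_cast
      ring)
    (h11.congr_fun fun p => by
      simp only [mul_exp, exp_mul, neg_one_zpow_sub]
      congr 2
      push_cast
      ring)
  simp only [theta1, theta3, theta4]
  rw [key, mul_mul_mul_comm (-I) _ (-I), neg_mul_neg, I_mul_I, neg_one_mul, sub_neg_eq_add]
end

section
/- For every τ in the upper half-plane and all x, y ∈ ℂ, one has θ₃((x+y)/2, τ/2)·θ₄((x−y)/2, τ/2) = θ₄(x,τ)·θ₄(y,τ) − θ₁(x,τ)·θ₁(y,τ). -/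
open Complex

/-- The sum-and-difference parametrisation of `ℤ × ℤ`: pairs of equal parity are `(a + b, a - b)`,
pairs of opposite parity are `(a + b + 1, a - b)`. -/
noncomputable def sumDiffEquiv : (ℤ × ℤ) ⊕ (ℤ × ℤ) ≃ ℤ × ℤ :=
  Equiv.ofBijective
    (Sum.elim (fun p => (p.1 + p.2, p.1 - p.2)) (fun p => (p.1 + p.2 + 1, p.1 - p.2))) <| by
  constructor
  · rintro (⟨a, b⟩ | ⟨a, b⟩) (⟨c, d⟩ | ⟨c, d⟩) h <;>
      simp only [Sum.elim_inl, Sum.elim_inr, Prod.mk.injEq] at h <;>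
      simp only [Sum.inl.injEq, Sum.inr.injEq, Prod.mk.injEq, reduceCtorEq] <;> omega
  · rintro ⟨m, n⟩
    rcases Int.even_or_odd' (m + n) with ⟨k, hk | hk⟩
    · exact ⟨Sum.inl (k, m - k), by ext <;> simp; omega⟩
    · exact ⟨Sum.inr (k, m - k - 1), by ext <;> simp <;> omega⟩

lemma sumDiffEquiv_inl (a b : ℤ) : sumDiffEquiv (Sum.inl (a, b)) = (a + b, a - b) := rfl

lemma sumDiffEquiv_inr (a b : ℤ) : sumDiffEquiv (Sum.inr (a, b)) = (a + b + 1, a - b) := rfl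

lemma summable_norm_theta3_term (z : ℂ) {τ : ℂ} (hτ : 0 < τ.im) :
    Summable fun n : ℤ => ‖Complex.exp ((Real.pi : ℂ) * I * τ * (n : ℂ) ^ 2) *
      Complex.exp (2 * I * (n : ℂ) * z)‖ := by
  refine ((summable_jacobiTheta₂_term_iff (z / Real.pi) τ).2 hτ).norm.congr fun n => ?_
  have hpi : (Real.pi : ℂ) ≠ 0 := by exact_mod_cast Real.pi_ne_zero
  rw [jacobiTheta₂_term, ← Complex.exp_add]
  congr 2
  field_simp
  ring

lemma summable_norm_theta4_term (z : ℂ) {τ : ℂ} (hτ : 0 < τ.im) :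
    Summable fun n : ℤ => ‖(-1 : ℂ) ^ n * Complex.exp ((Real.pi : ℂ) * I * τ * (n : ℂ) ^ 2) *
      Complex.exp (2 * I * (n : ℂ) * z)‖ := by
  simpa [norm_mul, norm_zpow] using summable_norm_theta3_term z hτ

lemma summable_norm_theta1_term (z : ℂ) {τ : ℂ} (hτ : 0 < τ.im) :
    Summable fun n : ℤ => ‖(-1 : ℂ) ^ n *
      Complex.exp ((Real.pi : ℂ) * I * τ * ((n : ℂ) + 1 / 2) ^ 2) *
      Complex.exp (I * (2 * (n : ℂ) + 1) * z)‖ := by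
  refine ((summable_norm_theta4_term (z + Real.pi * τ / 2) hτ).mul_left
    ‖Complex.exp (Real.pi * I * τ / 4 + I * z)‖).congr fun n => ?_
  rw [← norm_mul, mul_assoc (_ ^ n), mul_assoc (_ ^ n), mul_left_comm, ← Complex.exp_add,
    ← Complex.exp_add, ← Complex.exp_add]
  congr 3
  ring

theorem theta_product_identity_halved (τ : ℂ) (hτ : 0 < τ.im) (x y : ℂ) :
    theta3 ((x + y) / 2) (τ / 2) * theta4 ((x - y) / 2) (τ / 2) =
      theta4 x τ * theta4 y τ - theta1 x τ * theta1 y τ := by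
  have hτ2 : 0 < (τ / 2).im := by
    rw [Complex.div_ofNat_im]
    positivity
  have h3 := summable_norm_theta3_term ((x + y) / 2) hτ2
  have h4 := summable_norm_theta4_term ((x - y) / 2) hτ2
  have hsign (a b : ℤ) : (-1 : ℂ) ^ (a - b) = (-1) ^ a * (-1) ^ b := by
    rw [zpow_sub₀ (by norm_num), div_eq_mul_inv, ← inv_zpow, inv_neg, inv_one]
  have hleft (s t p q r u : ℂ) : Complex.exp p * Complex.exp q *
      (s * t * Complex.exp r * Complex.exp u) = s * t * Complex.exp (p + q + r + u) := by
    simp only [Complex.exp_add]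
    ring
  have hright (s t p q r u : ℂ) : s * Complex.exp p * Complex.exp q *
      (t * Complex.exp r * Complex.exp u) = s * t * Complex.exp (p + q + r + u) := by
    simp only [Complex.exp_add]
    ring
  have key : theta3 ((x + y) / 2) (τ / 2) * theta4 ((x - y) / 2) (τ / 2) =
      theta4 x τ * theta4 y τ + (I * theta1 x τ) * (I * theta1 y τ) := by
    simp only [theta1, theta3, theta4, ← mul_assoc, mul_neg, I_mul_I, neg_neg, one_mul]
    rw [tsum_mul_tsum_of_summable_norm h3 h4,
      tsum_mul_tsum_of_summable_norm (summable_norm_theta4_term x hτ)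
        (summable_norm_theta4_term y hτ),
      tsum_mul_tsum_of_summable_norm (summable_norm_theta1_term x hτ)
        (summable_norm_theta1_term y hτ),
      ← sumDiffEquiv.tsum_eq]
    have hs := sumDiffEquiv.summable_iff.2 (summable_mul_of_summable_norm h3 h4)
    refine (Summable.tsum_sum (hs.comp_injective Sum.inl_injective)
      (hs.comp_injective Sum.inr_injective)).trans ?_
    congr 1 <;> refine tsum_congr fun ⟨a, b⟩ => ?_
    · rw [Function.comp_apply, sumDiffEquiv_inl]
      dsimp only
      rw [hsign, hleft, hright]
      push_cast
      ring_nf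
    · rw [Function.comp_apply, sumDiffEquiv_inr]
      dsimp only
      rw [hsign, hleft, hright]
      push_cast
      ring_nf
  rw [key]
  linear_combination theta1 x τ * theta1 y τ * I_mul_I
end

section
/- For every τ in the upper half-plane, the theta constants satisfy Jacobi's identity θ₂(0,τ)⁴ + θ₄(0,τ)⁴ = θ₃(0,τ)⁴. Equivalently, setting k = θ₂(0,τ)²/θ₃(0,τ)² and k′ = θ₄(0,τ)²/θ₃(0,τ)², one has k² + k′² = 1. -/
open Complex

/-- A sum over `ℤ × ℤ` splits according to the parity of the sum of the coordinates. -/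
lemma tsum_prod_int_eq_add_parity {g : ℤ × ℤ → ℂ} (hg : Summable g) :
    ∑' p, g p = ∑' p : ℤ × ℤ, g (p.1 + p.2, p.1 - p.2) +
      ∑' p : ℤ × ℤ, g (p.1 + p.2 + 1, p.1 - p.2) := by
  let φ : (ℤ × ℤ) ⊕ (ℤ × ℤ) → ℤ × ℤ :=
    Sum.elim (fun p ↦ (p.1 + p.2, p.1 - p.2)) (fun p ↦ (p.1 + p.2 + 1, p.1 - p.2))
  have hφ : Function.Bijective φ := by
    constructor
    · rintro (⟨a, b⟩ | ⟨a, b⟩) (⟨c, d⟩ | ⟨c, d⟩) h <;>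
        simp only [φ, Sum.elim_inl, Sum.elim_inr, Prod.mk.injEq, Sum.inl.injEq, Sum.inr.injEq,
          reduceCtorEq] at h ⊢ <;> omega
    · rintro ⟨m, n⟩
      rcases Int.even_or_odd' (m + n) with ⟨a, ha | ha⟩
      · exact ⟨Sum.inl (a, m - a), by
          simp only [φ, Sum.elim_inl, Prod.mk.injEq]; omega⟩
      · exact ⟨Sum.inr (a, m - a - 1), by
          simp only [φ, Sum.elim_inr, Prod.mk.injEq]; omega⟩
  have hs : Summable (g ∘ φ) := hg.comp_injective hφ.injective
  have h := (Equiv.ofBijective φ hφ).tsum_eq g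
  rw [← h]
  exact Summable.tsum_sum (f := g ∘ φ) (hs.comp_injective Sum.inl_injective)
    (hs.comp_injective Sum.inr_injective)

lemma theta3_zero_eq (τ : ℂ) :
    theta3 0 τ = ∑' n : ℤ, Complex.exp ((Real.pi : ℂ) * I * τ * (n : ℂ) ^ 2) := by
  simp [theta3]

lemma theta2_zero_eq (τ : ℂ) :
    theta2 0 τ = ∑' n : ℤ, Complex.exp ((Real.pi : ℂ) * I * τ * ((n : ℂ) + 1 / 2) ^ 2) := by
  simp [theta2]

lemma theta4_zero_eq (τ : ℂ) :
    theta4 0 τ =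
      ∑' n : ℤ, (-1 : ℂ) ^ n * Complex.exp ((Real.pi : ℂ) * I * τ * (n : ℂ) ^ 2) := by
  simp [theta4]

lemma summable_norm_theta3_zero {τ : ℂ} (hτ : 0 < τ.im) :
    Summable fun n : ℤ ↦ ‖Complex.exp ((Real.pi : ℂ) * I * τ * (n : ℂ) ^ 2)‖ := by
  refine ((summable_jacobiTheta₂_term_iff 0 τ).mpr hτ).norm.congr fun n ↦ ?_
  rw [jacobiTheta₂_term]
  congr 2
  ring

lemma summable_norm_theta2_zero {τ : ℂ} (hτ : 0 < τ.im) :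
    Summable fun n : ℤ ↦ ‖Complex.exp ((Real.pi : ℂ) * I * τ * ((n : ℂ) + 1 / 2) ^ 2)‖ := by
  refine (((summable_jacobiTheta₂_term_iff (τ / 2) τ).mpr hτ).mul_right
    (Complex.exp ((Real.pi : ℂ) * I * τ / 4))).norm.congr fun n ↦ ?_
  rw [jacobiTheta₂_term, ← Complex.exp_add]
  congr 2
  ring

lemma summable_norm_theta4_zero {τ : ℂ} (hτ : 0 < τ.im) :
    Summable fun n : ℤ ↦
      ‖(-1 : ℂ) ^ n * Complex.exp ((Real.pi : ℂ) * I * τ * (n : ℂ) ^ 2)‖ := by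
  refine (summable_norm_theta3_zero hτ).congr fun n ↦ ?_
  simp

lemma im_two_mul_pos {τ : ℂ} (hτ : 0 < τ.im) : 0 < (2 * τ).im := by
  simpa using hτ

lemma theta3_zero_sq {τ : ℂ} (hτ : 0 < τ.im) :
    theta3 0 τ ^ 2 = theta3 0 (2 * τ) ^ 2 + theta2 0 (2 * τ) ^ 2 := by
  have h := summable_norm_theta3_zero hτ
  have h3 := summable_norm_theta3_zero (im_two_mul_pos hτ)
  have h2 := summable_norm_theta2_zero (im_two_mul_pos hτ)
  simp only [theta3_zero_eq, theta2_zero_eq]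
  rw [sq, sq, sq, tsum_mul_tsum_of_summable_norm h h, tsum_mul_tsum_of_summable_norm h3 h3,
    tsum_mul_tsum_of_summable_norm h2 h2,
    tsum_prod_int_eq_add_parity (summable_mul_of_summable_norm h h)]
  congr 1 <;> refine tsum_congr fun p ↦ ?_ <;> simp only [← Complex.exp_add] <;> congr 1 <;>
    push_cast <;> ring

lemma theta4_zero_sq {τ : ℂ} (hτ : 0 < τ.im) :
    theta4 0 τ ^ 2 = theta3 0 (2 * τ) ^ 2 - theta2 0 (2 * τ) ^ 2 := by
  have h := summable_norm_theta4_zero hτ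
  have h3 := summable_norm_theta3_zero (im_two_mul_pos hτ)
  have h2 := summable_norm_theta2_zero (im_two_mul_pos hτ)
  simp only [theta3_zero_eq, theta2_zero_eq, theta4_zero_eq]
  rw [sq, sq, sq, tsum_mul_tsum_of_summable_norm h h, tsum_mul_tsum_of_summable_norm h3 h3,
    tsum_mul_tsum_of_summable_norm h2 h2,
    tsum_prod_int_eq_add_parity (summable_mul_of_summable_norm h h), sub_eq_add_neg, ← tsum_neg]
  have hneg : (-1 : ℂ) ≠ 0 := by norm_num
  congr 1 <;> refine tsum_congr fun p ↦ ?_ <;>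
    rw [mul_mul_mul_comm, ← zpow_add₀ hneg, ← Complex.exp_add, ← Complex.exp_add]
  · rw [Even.neg_one_zpow ⟨p.1, by ring⟩, one_mul]
    congr 1
    push_cast
    ring
  · rw [Odd.neg_one_zpow ⟨p.1, by ring⟩, neg_one_mul]
    congr 2
    push_cast
    ring

lemma theta2_zero_sq {τ : ℂ} (hτ : 0 < τ.im) :
    theta2 0 τ ^ 2 = 2 * theta2 0 (2 * τ) * theta3 0 (2 * τ) := by
  have h := summable_norm_theta2_zero hτ
  have h3 := summable_norm_theta3_zero (im_two_mul_pos hτ)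
  have h2 := summable_norm_theta2_zero (im_two_mul_pos hτ)
  rw [show 2 * theta2 0 (2 * τ) * theta3 0 (2 * τ) =
    theta2 0 (2 * τ) * theta3 0 (2 * τ) + theta3 0 (2 * τ) * theta2 0 (2 * τ) by ring]
  simp only [theta3_zero_eq, theta2_zero_eq]
  rw [sq, tsum_mul_tsum_of_summable_norm h h, tsum_mul_tsum_of_summable_norm h3 h2,
    tsum_mul_tsum_of_summable_norm h2 h3,
    tsum_prod_int_eq_add_parity (summable_mul_of_summable_norm h h),
    ← ((Equiv.addRight (1 : ℤ)).prodCongr (Equiv.refl ℤ)).tsum_eq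
      (fun p : ℤ × ℤ ↦ Complex.exp ((Real.pi : ℂ) * I * (2 * τ) * (p.1 : ℂ) ^ 2) *
        Complex.exp ((Real.pi : ℂ) * I * (2 * τ) * ((p.2 : ℂ) + 1 / 2) ^ 2))]
  congr 1 <;> refine tsum_congr fun p ↦ ?_ <;>
    simp only [← Complex.exp_add, Equiv.prodCongr_apply, Prod.map, Equiv.coe_addRight,
      Equiv.refl_apply] <;> congr 1 <;> push_cast <;> ring

lemma theta2_zero_pow_four_add {τ : ℂ} (hτ : 0 < τ.im) :
    theta2 0 τ ^ 4 + theta4 0 τ ^ 4 = theta3 0 τ ^ 4 := by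
  linear_combination (theta2 0 τ ^ 2 + 2 * theta2 0 (2 * τ) * theta3 0 (2 * τ)) *
      theta2_zero_sq hτ +
    (theta4 0 τ ^ 2 + theta3 0 (2 * τ) ^ 2 - theta2 0 (2 * τ) ^ 2) * theta4_zero_sq hτ -
    (theta3 0 τ ^ 2 + theta3 0 (2 * τ) ^ 2 + theta2 0 (2 * τ) ^ 2) * theta3_zero_sq hτ

lemma theta4_zero_two_mul_pow_four {τ : ℂ} (hτ : 0 < τ.im) :
    theta4 0 (2 * τ) ^ 4 = theta3 0 τ ^ 2 * theta4 0 τ ^ 2 := by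
  rw [theta3_zero_sq hτ, theta4_zero_sq hτ]
  linear_combination theta2_zero_pow_four_add (im_two_mul_pos hτ)

lemma theta4_zero_eq_jacobiTheta (τ : ℂ) : theta4 0 τ = jacobiTheta (τ + 1) := by
  rw [theta4_zero_eq, jacobiTheta]
  refine tsum_congr fun n ↦ ?_
  rw [show (Real.pi : ℂ) * I * n ^ 2 * (τ + 1) =
    Real.pi * I * n ^ 2 + Real.pi * I * τ * n ^ 2 by ring, Complex.exp_add]
  congr 1
  have h : (-1 : ℂ) ^ n = (-1 : ℂ) ^ (n ^ 2) := by
    rcases Int.even_or_odd n with hn | hn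
    · rw [hn.neg_one_zpow, (hn.pow_of_ne_zero two_ne_zero).neg_one_zpow]
    · rw [hn.neg_one_zpow, hn.pow.neg_one_zpow]
  rw [h, ← Complex.exp_pi_mul_I, ← Complex.exp_int_mul]
  congr 1
  push_cast
  ring

lemma tendsto_theta4_zero_two_pow_mul {τ : ℂ} (hτ : 0 < τ.im) :
    Filter.Tendsto (fun n : ℕ ↦ theta4 0 (2 ^ n * τ)) Filter.atTop (nhds 1) := by
  have him : Filter.Tendsto (fun n : ℕ ↦ 2 ^ n * τ + 1) Filter.atTop
      (Filter.comap Complex.im Filter.atTop) := by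
    refine Filter.tendsto_comap_iff.mpr (Filter.Tendsto.congr (fun n ↦ ?_)
      ((tendsto_pow_atTop_atTop_of_one_lt (one_lt_two (α := ℝ))).atTop_mul_const hτ))
    rw [Function.comp_apply, Complex.add_im, Complex.one_im, add_zero, ← Complex.ofReal_ofNat,
      ← Complex.ofReal_pow, Complex.im_ofReal_mul]
  have hexp : Filter.Tendsto (fun σ : ℂ ↦ Real.exp (-Real.pi * σ.im))
      (Filter.comap Complex.im Filter.atTop) (nhds 0) :=
    Real.tendsto_exp_atBot.comp
      (Filter.tendsto_comap.const_mul_atTop_of_neg (neg_neg_of_pos Real.pi_pos))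
  have h := (isBigO_at_im_infty_jacobiTheta_sub_one.trans_tendsto hexp).comp him
  simpa [Function.comp_def, theta4_zero_eq_jacobiTheta] using h.add_const 1

/-- The theta constant `θ₃(0, τ)` does not vanish: a zero would propagate to `θ₄(0, 2 ^ n * τ)` for
all `n ≥ 1`, whereas these values tend to `1`. -/
lemma theta3_zero_ne_zero {τ : ℂ} (hτ : 0 < τ.im) : theta3 0 τ ≠ 0 := by
  intro h
  have hz : ∀ n : ℕ, theta4 0 (2 ^ (n + 1) * τ) = 0 := by
    intro n
    induction n with
    | zero =>
      have := theta4_zero_two_mul_pow_four hτ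
      rw [h] at this
      simpa using this
    | succ n ih =>
      have hpos : 0 < (2 ^ (n + 1) * τ).im := by
        rw [← Complex.ofReal_ofNat, ← Complex.ofReal_pow, Complex.im_ofReal_mul]
        positivity
      have := theta4_zero_two_mul_pow_four hpos
      rw [ih, ← mul_assoc, ← pow_succ'] at this
      simpa using this
  have ht := (tendsto_theta4_zero_two_pow_mul hτ).comp (Filter.tendsto_add_atTop_nat 1)
  refine zero_ne_one (tendsto_nhds_unique ?_ ht)
  exact tendsto_const_nhds.congr fun n ↦ (hz n).symm

theorem jacobi_theta_constant_identity (τ : ℂ) (hτ : 0 < τ.im) :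
    theta2 0 τ ^ 4 + theta4 0 τ ^ 4 = theta3 0 τ ^ 4 ∧
      (theta2 0 τ ^ 2 / theta3 0 τ ^ 2) ^ 2 + (theta4 0 τ ^ 2 / theta3 0 τ ^ 2) ^ 2 = 1 := by
  have h := theta2_zero_pow_four_add hτ
  have h3 := theta3_zero_ne_zero hτ
  refine ⟨h, ?_⟩
  field_simp
  exact h
end

section
/- Let p ≥ 1 and let l₁, …, l_p be nonzero linear forms l_k(x,y) = a_k·x + b_k·y on ℂ², pairwise linearly independent (a_j·b_k − a_k·b_j ≠ 0 for j ≠ k). For an entire (everywhere complex-analytic) function h : ℂ² → ℂ, define X_k h := b_k·(∂h/∂x) − a_k·(∂h/∂y) (the derivative of h along the constant vector field tangent to the level lines of l_k). Then X₁X₂⋯X_p h is identically zero on ℂ² if and only if there exist entire functions f₁, …, f_p : ℂ → ℂ such that h(x,y) = ∑_{k=1}^p f_k(l_k(x,y)) for all (x,y) ∈ ℂ². -/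
/-- The constant-coefficient first-order operator `X h = b ∂h/∂x - a ∂h/∂y`
associated with the linear form `l(x,y) = a x + b y` on `ℂ²`. -/
noncomputable def lineOp (a b : ℂ) (h : ℂ × ℂ → ℂ) : ℂ × ℂ → ℂ :=
  fun z => b * fderiv ℂ h z (1, 0) - a * fderiv ℂ h z (0, 1)

/-- `lineOp a b h` is the derivative of `h` along the vector `(b, -a)`. -/
lemma lineOp_apply (a b : ℂ) (h : ℂ × ℂ → ℂ) (z : ℂ × ℂ) :
    lineOp a b h z = fderiv ℂ h z (b, -a) := by
  have hv : ((b, -a) : ℂ × ℂ) = b • (1, 0) - a • (0, 1) := by simp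
  rw [hv, map_sub, map_smul, map_smul]
  rfl

lemma AnalyticOnNhd.lineOp {h : ℂ × ℂ → ℂ} (hh : AnalyticOnNhd ℂ h Set.univ) (a b : ℂ) :
    AnalyticOnNhd ℂ (lineOp a b h) Set.univ := by
  have key (v : ℂ × ℂ) : AnalyticOnNhd ℂ (fun z => fderiv ℂ h z v) Set.univ :=
    fun z hz => (ContinuousLinearMap.apply ℂ ℂ v).analyticAt _ |>.comp (hh.fderiv z hz)
  exact (analyticOnNhd_const.mul (key (1, 0))).sub (analyticOnNhd_const.mul (key (0, 1)))

lemma hasFDerivAt_comp_linearForm {f : ℂ → ℂ} {f' : ℂ} (c d : ℂ) (z : ℂ × ℂ)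
    (hf : HasDerivAt f f' (c * z.1 + d * z.2)) :
    HasFDerivAt (fun w : ℂ × ℂ => f (c * w.1 + d * w.2))
      (f' • (c • ContinuousLinearMap.fst ℂ ℂ ℂ + d • ContinuousLinearMap.snd ℂ ℂ ℂ)) z :=
  hf.comp_hasFDerivAt z ((hasFDerivAt_fst.const_mul c).add (hasFDerivAt_snd.const_mul d))

lemma analyticOnNhd_comp_linearForm {f : ℂ → ℂ} (hf : AnalyticOnNhd ℂ f Set.univ) (c d : ℂ) :
    AnalyticOnNhd ℂ (fun w : ℂ × ℂ => f (c * w.1 + d * w.2)) Set.univ :=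
  fun z _ => AnalyticAt.fun_comp (f := fun w : ℂ × ℂ => c * w.1 + d * w.2)
    (hf (c * z.1 + d * z.2) trivial)
    ((analyticAt_const.mul analyticAt_fst).add (analyticAt_const.mul analyticAt_snd))

/-- The action of `lineOp` on a sum of functions of linear forms. -/
lemma lineOp_sum_comp_linearForm {ι : Type*} [Fintype ι] (a b : ℂ) (c d : ι → ℂ)
    {f f' : ι → ℂ → ℂ} (hf : ∀ k t, HasDerivAt (f k) (f' k t) t) (z : ℂ × ℂ) :
    lineOp a b (fun w => ∑ k, f k (c k * w.1 + d k * w.2)) z =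
      ∑ k, (c k * b - a * d k) * f' k (c k * z.1 + d k * z.2) := by
  have H := HasFDerivAt.fun_sum (u := Finset.univ)
    fun k _ => hasFDerivAt_comp_linearForm (c k) (d k) z (hf k _)
  rw [lineOp_apply, H.fderiv, sum_apply]
  refine Finset.sum_congr rfl fun k _ => ?_
  simp
  ring

/-- An entire function annihilated by `lineOp a b` is an entire function of `a x + b y`. -/
lemma exists_eq_comp_of_lineOp_eq_zero {a b : ℂ} (hab : (a, b) ≠ (0, 0)) {h : ℂ × ℂ → ℂ}
    (hh : AnalyticOnNhd ℂ h Set.univ) (h0 : ∀ z, lineOp a b h z = 0) :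
    ∃ f : ℂ → ℂ, AnalyticOnNhd ℂ f Set.univ ∧ ∀ z : ℂ × ℂ, h z = f (a * z.1 + b * z.2) := by
  have hd : Differentiable ℂ h := fun z => (hh z trivial).differentiableAt
  obtain ⟨u, v, huv⟩ : ∃ u v : ℂ, a * u + b * v = 1 := by
    by_cases ha : a = 0
    · have hb : b ≠ 0 := fun hb => hab (by rw [ha, hb])
      exact ⟨0, b⁻¹, by simp [hb]⟩
    · exact ⟨a⁻¹, 0, by simp [ha]⟩
  refine ⟨fun t => h (t * u, t * v), ?_, fun z => ?_⟩
  · rw [Complex.analyticOnNhd_univ_iff_differentiable]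
    fun_prop
  · have hline (t : ℂ) : HasDerivAt (fun s : ℂ => h (z + s • (b, -a))) 0 t := by
      have h1 : HasDerivAt (fun s : ℂ => z + s • ((b, -a) : ℂ × ℂ)) (b, -a) t := by
        simpa using ((hasDerivAt_id t).smul_const ((b, -a) : ℂ × ℂ)).const_add z
      have h2 := (hd (z + t • (b, -a))).hasFDerivAt.comp_hasDerivAt t h1
      rwa [← lineOp_apply, h0] at h2
    have hconst := is_const_of_deriv_eq_zero (fun t => (hline t).differentiableAt)
      (fun t => (hline t).deriv) 0 (u * z.2 - v * z.1)
    simp only [zero_smul, add_zero] at hconst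
    rw [hconst]
    congr 1
    ext
    · simp only [Prod.fst_add, Prod.smul_fst, smul_eq_mul]
      linear_combination -z.1 * huv
    · simp only [Prod.snd_add, Prod.smul_snd, smul_eq_mul]
      linear_combination -z.2 * huv

lemma lineOp_sub {h g : ℂ × ℂ → ℂ} {z : ℂ × ℂ} (hh : DifferentiableAt ℂ h z)
    (hg : DifferentiableAt ℂ g z) (a b : ℂ) :
    lineOp a b (fun w => h w - g w) z = lineOp a b h z - lineOp a b g z := by
  simp only [lineOp_apply]
  rw [fderiv_fun_sub hh hg, sub_apply]

/-- For pairwise independent linear forms `l₁, …, l_p` on `ℂ²` and an entire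
function `h : ℂ² → ℂ`, one has `X₁X₂⋯X_p h ≡ 0` iff `h` is a sum of entire
functions of the individual forms: `h = ∑ₖ fₖ ∘ lₖ`. -/
theorem iterated_lineOp_eq_zero_iff (p : ℕ) (hp : 1 ≤ p) (a b : Fin p → ℂ)
    (hne : ∀ k, (a k, b k) ≠ (0, 0))
    (hind : ∀ j k, j ≠ k → a j * b k - a k * b j ≠ 0)
    (h : ℂ × ℂ → ℂ) (hh : AnalyticOnNhd ℂ h Set.univ) :
    (∀ z : ℂ × ℂ, (List.finRange p).foldr (fun k g => lineOp (a k) (b k) g) h z = 0) ↔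
      ∃ f : Fin p → ℂ → ℂ, (∀ k, AnalyticOnNhd ℂ (f k) Set.univ) ∧
        ∀ z : ℂ × ℂ, h z = ∑ k : Fin p, f k (a k * z.1 + b k * z.2) := by
  clear hp
  induction p generalizing h with
  | zero => simp
  | succ n ih =>
    have ih' := ih (fun k => a k.castSucc) (fun k => b k.castSucc) (fun k => hne _)
      (fun j k hjk => hind _ _ fun e => hjk (Fin.castSucc_injective n e))
      (lineOp (a (Fin.last n)) (b (Fin.last n)) h) (hh.lineOp _ _)
    rw [List.finRange_succ_last, List.foldr_append, List.foldr_map, List.foldr_cons,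
      List.foldr_nil, ih']
    constructor
    · rintro ⟨g, hg, hsum⟩
      have hprim (k : Fin n) := (Complex.analyticOnNhd_univ_iff_differentiable.mp
        (hg k)).isExactOn_univ
      choose G hG using hprim
      let c : Fin n → ℂ :=
        fun k => a k.castSucc * b (Fin.last n) - a (Fin.last n) * b k.castSucc
      have hc0 (k : Fin n) : c k ≠ 0 := hind _ _ (Fin.castSucc_lt_last k).ne
      have hF (k : Fin n) (t : ℂ) : HasDerivAt (fun s => (c k)⁻¹ * G k s) ((c k)⁻¹ * g k t) t :=
        (hG k t trivial).const_mul _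
      have hFan (k : Fin n) : AnalyticOnNhd ℂ (fun s => (c k)⁻¹ * G k s) Set.univ :=
        Complex.analyticOnNhd_univ_iff_differentiable.mpr fun t => (hF k t).differentiableAt
      have hSan : AnalyticOnNhd ℂ (fun w : ℂ × ℂ =>
          ∑ k : Fin n, (c k)⁻¹ * G k (a k.castSucc * w.1 + b k.castSucc * w.2)) Set.univ :=
        Finset.analyticOnNhd_fun_sum _ fun k _ => analyticOnNhd_comp_linearForm (hFan k) _ _
      obtain ⟨f, hf, hfeq⟩ := exists_eq_comp_of_lineOp_eq_zero (hne (Fin.last n))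
        (hh.sub hSan) fun z => by
          refine (lineOp_sub (hh z trivial).differentiableAt
            (hSan z trivial).differentiableAt _ _).trans ?_
          rw [lineOp_sum_comp_linearForm _ _ _ _ hF, hsum, sub_eq_zero]
          exact Finset.sum_congr rfl fun k _ => (mul_inv_cancel_left₀ (hc0 k) _).symm
      refine ⟨Fin.snoc (fun k s => (c k)⁻¹ * G k s) f, fun k => ?_, fun z => ?_⟩
      · induction k using Fin.lastCases with
        | last => simpa using hf
        | cast k => simpa using hFan k
      · have := hfeq z
        simp only [Pi.sub_apply] at this
        simp only [Fin.sum_univ_castSucc, Fin.snoc_castSucc, Fin.snoc_last]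
        rw [← this, add_sub_cancel]
    · rintro ⟨f, hf, hsum⟩
      have hf' (k : Fin (n + 1)) (t : ℂ) : HasDerivAt (f k) (deriv (f k) t) t :=
        (hf k t trivial).differentiableAt.hasDerivAt
      refine ⟨fun k t => (a k.castSucc * b (Fin.last n) - a (Fin.last n) * b k.castSucc) *
        deriv (f k.castSucc) t, fun k => analyticOnNhd_const.mul (hf _).deriv, fun z => ?_⟩
      rw [funext hsum, lineOp_sum_comp_linearForm _ _ _ _ hf', Fin.sum_univ_castSucc]
      simp
end

section
/- Let τ be in the upper half-plane, with theta constants θ₂ = θ₂(0,τ), θ₃ = θ₃(0,τ), θ₄ = θ₄(0,τ) (all nonzero), modulus k = θ₂²/θ₃², and Jacobi elliptic functions sn, cn, dn of modulus k defined by sn(x) = (θ₃/θ₂)·θ₁(x/θ₃²,τ)/θ₄(x/θ₃²,τ), cn(x) = (θ₄/θ₂)·θ₂(x/θ₃²,τ)/θ₄(x/θ₃²,τ), dn(x) = (θ₄/θ₃)·θ₃(x/θ₃²,τ)/θ₄(x/θ₃²,τ). Then for all x, y ∈ ℂ at which sn, cn, dn are defined at x, y, x+y and x−y (i.e. θ₄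 does not vanish at the corresponding arguments) and for which 1 − k·sn(x)·sn(y) ≠ 0 and dn(x−y) − k·cn(x−y) ≠ 0, one has (1 + k·sn(x)·sn(y)) / (1 − k·sn(x)·sn(y)) = (dn(x+y) − k·cn(x+y)) / (dn(x−y) − k·cn(x−y)). -/
open Complex

/-- The elliptic modulus `k = θ₂(0,τ)²/θ₃(0,τ)²`. -/
noncomputable def ellMod (τ : ℂ) : ℂ := theta2 0 τ ^ 2 / theta3 0 τ ^ 2

/-- Jacobi elliptic function `sn` of parameter `τ`. -/
noncomputable def ellSn (τ x : ℂ) : ℂ :=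
  (theta3 0 τ / theta2 0 τ) * (theta1 (x / theta3 0 τ ^ 2) τ / theta4 (x / theta3 0 τ ^ 2) τ)

/-- Jacobi elliptic function `cn` of parameter `τ`. -/
noncomputable def ellCn (τ x : ℂ) : ℂ :=
  (theta4 0 τ / theta2 0 τ) * (theta2 (x / theta3 0 τ ^ 2) τ / theta4 (x / theta3 0 τ ^ 2) τ)

/-- Jacobi elliptic function `dn` of parameter `τ`. -/
noncomputable def ellDn (τ x : ℂ) : ℂ :=
  (theta4 0 τ / theta3 0 τ) * (theta3 (x / theta3 0 τ ^ 2) τ / theta4 (x / theta3 0 τ ^ 2) τ)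

lemma exp_pi_mul_I_mul_intCast (n : ℤ) : cexp (Real.pi * I * n) = (-1) ^ n := by
  rw [← exp_pi_mul_I, ← exp_int_mul]
  ring_nf

lemma theta3_eq_jacobiTheta₂ (z τ : ℂ) : theta3 z τ = jacobiTheta₂ (z / Real.pi) τ := by
  have hπ : (Real.pi : ℂ) ≠ 0 := ofReal_ne_zero.2 Real.pi_ne_zero
  unfold theta3 jacobiTheta₂ jacobiTheta₂_term
  refine tsum_congr fun n => ?_
  rw [← Complex.exp_add]
  congr 1
  field_simp
  ring

lemma theta4_eq_jacobiTheta₂ (z τ : ℂ) :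
    theta4 z τ = jacobiTheta₂ (z / Real.pi + 1 / 2) τ := by
  have hπ : (Real.pi : ℂ) ≠ 0 := ofReal_ne_zero.2 Real.pi_ne_zero
  unfold theta4 jacobiTheta₂ jacobiTheta₂_term
  refine tsum_congr fun n => ?_
  rw [← exp_pi_mul_I_mul_intCast, ← Complex.exp_add, ← Complex.exp_add]
  congr 1
  field_simp
  ring

lemma theta2_eq_jacobiTheta₂ (z τ : ℂ) :
    theta2 z τ =
      cexp (Real.pi * I * τ / 4 + I * z) * jacobiTheta₂ (z / Real.pi + τ / 2) τ := by
  have hπ : (Real.pi : ℂ) ≠ 0 := ofReal_ne_zero.2 Real.pi_ne_zero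
  unfold theta2 jacobiTheta₂ jacobiTheta₂_term
  rw [← tsum_mul_left]
  refine tsum_congr fun n => ?_
  rw [← Complex.exp_add, ← Complex.exp_add]
  congr 1
  field_simp
  ring

lemma theta1_eq_jacobiTheta₂ (z τ : ℂ) :
    theta1 z τ = -I *
      (cexp (Real.pi * I * τ / 4 + I * z) * jacobiTheta₂ (z / Real.pi + τ / 2 + 1 / 2) τ) := by
  have hπ : (Real.pi : ℂ) ≠ 0 := ofReal_ne_zero.2 Real.pi_ne_zero
  unfold theta1 jacobiTheta₂ jacobiTheta₂_term
  congr 1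
  rw [← tsum_mul_left]
  refine tsum_congr fun n => ?_
  rw [← exp_pi_mul_I_mul_intCast, ← Complex.exp_add, ← Complex.exp_add, ← Complex.exp_add]
  congr 1
  field_simp
  ring

lemma HasSum.mul_complex {ι κ : Type*} {f : ι → ℂ} {g : κ → ℂ} {s t : ℂ} (hf : HasSum f s)
    (hg : HasSum g t) : HasSum (fun p : ι × κ => f p.1 * g p.2) (s * t) :=
  hf.mul hg (summable_mul_of_summable_norm hf.summable.norm hg.summable.norm)

lemma hasSum_jacobiTheta₂_mul (u v : ℂ) {σ : ℂ} (hσ : 0 < σ.im) :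
    HasSum (fun p : ℤ × ℤ => jacobiTheta₂_term p.1 u σ * jacobiTheta₂_term p.2 v σ)
      (jacobiTheta₂ u σ * jacobiTheta₂ v σ) := by
  have hu := hasSum_jacobiTheta₂_term u hσ
  have hv := hasSum_jacobiTheta₂_term v hσ
  have huv := hu.mul_complex hv
  exact huv

/-- The product of two theta series of parameter `σ`, split according to the parity of the sum of
the two summation indices. -/
lemma jacobiTheta₂_mul (u v : ℂ) {σ : ℂ} (hσ : 0 < σ.im) :
    jacobiTheta₂ u σ * jacobiTheta₂ v σ =
      jacobiTheta₂ (u + v) (2 * σ) * jacobiTheta₂ (u - v) (2 * σ) +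
      cexp (Real.pi * I * (σ + 2 * u)) *
        (jacobiTheta₂ (u + v + σ) (2 * σ) * jacobiTheta₂ (u - v + σ) (2 * σ)) := by
  have h2σ : 0 < (2 * σ).im := by simpa using hσ
  let f : ℤ × ℤ → ℂ := fun p => jacobiTheta₂_term p.1 u σ * jacobiTheta₂_term p.2 v σ
  let even : ℤ × ℤ → ℤ × ℤ := fun p => (p.1 + p.2, p.1 - p.2)
  let odd : ℤ × ℤ → ℤ × ℤ := fun p => (p.1 + p.2 + 1, p.1 - p.2)
  have even_inj : Function.Injective even := by
    rintro ⟨a, b⟩ ⟨c, d⟩ h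
    simp only [even, Prod.mk.injEq] at h ⊢
    omega
  have odd_inj : Function.Injective odd := by
    rintro ⟨a, b⟩ ⟨c, d⟩ h
    simp only [odd, Prod.mk.injEq] at h ⊢
    omega
  have compl : IsCompl (Set.range even) (Set.range odd) := by
    constructor
    · rw [Set.disjoint_left]
      rintro _ ⟨⟨a, b⟩, rfl⟩ ⟨⟨c, d⟩, h⟩
      simp only [even, odd, Prod.mk.injEq] at h
      omega
    · rw [codisjoint_iff_le_sup]
      rintro ⟨m, n⟩ -
      rcases Int.even_or_odd' (m + n) with ⟨s, hs | hs⟩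
      · exact Or.inl ⟨(s, m - s), by simp only [even, Prod.mk.injEq]; omega⟩
      · exact Or.inr ⟨(s, m - s - 1), by simp only [odd, Prod.mk.injEq]; omega⟩
  have even_sum : HasSum (f ∘ even)
      (jacobiTheta₂ (u + v) (2 * σ) * jacobiTheta₂ (u - v) (2 * σ)) := by
    convert hasSum_jacobiTheta₂_mul (u + v) (u - v) h2σ using 2 with p
    simp only [f, even, Function.comp, jacobiTheta₂_term, ← Complex.exp_add]
    congr 1
    push_cast
    ring
  have odd_sum : HasSum (f ∘ odd) (cexp (Real.pi * I * (σ + 2 * u)) *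
      (jacobiTheta₂ (u + v + σ) (2 * σ) * jacobiTheta₂ (u - v + σ) (2 * σ))) := by
    refine ((hasSum_jacobiTheta₂_mul (u + v + σ) (u - v + σ) h2σ).mul_left
      (cexp (Real.pi * I * (σ + 2 * u)))).congr_fun fun p => ?_
    simp only [f, odd, Function.comp, jacobiTheta₂_term, ← Complex.exp_add]
    congr 1
    push_cast
    ring
  exact (hasSum_jacobiTheta₂_mul u v hσ).unique
    ((even_inj.hasSum_range_iff.2 even_sum).add_isCompl compl (odd_inj.hasSum_range_iff.2 odd_sum))

lemma theta3_mul_theta4 (z w : ℂ) {σ : ℂ} (hσ : 0 < σ.im) :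
    theta3 z σ * theta4 w σ =
      theta4 (z + w) (2 * σ) * theta4 (z - w) (2 * σ) -
        theta1 (z + w) (2 * σ) * theta1 (z - w) (2 * σ) := by
  have hπ : (Real.pi : ℂ) ≠ 0 := ofReal_ne_zero.2 Real.pi_ne_zero
  simp only [theta1_eq_jacobiTheta₂, theta3_eq_jacobiTheta₂, theta4_eq_jacobiTheta₂]
  rw [jacobiTheta₂_mul _ _ hσ,
    ← jacobiTheta₂_add_left (z / Real.pi - (w / Real.pi + 1 / 2)),
    ← jacobiTheta₂_add_left (z / Real.pi - (w / Real.pi + 1 / 2) + σ)]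
  have hexp : cexp (Real.pi * I * (σ + 2 * (z / Real.pi))) =
      cexp (Real.pi * I * (2 * σ) / 4 + I * (z + w)) *
        cexp (Real.pi * I * (2 * σ) / 4 + I * (z - w)) := by
    rw [← Complex.exp_add]
    congr 1
    field_simp
    ring
  rw [hexp]
  ring_nf
  simp only [I_sq]
  ring

lemma theta4_mul_theta3 (z w : ℂ) {σ : ℂ} (hσ : 0 < σ.im) :
    theta4 z σ * theta3 w σ =
      theta4 (z + w) (2 * σ) * theta4 (z - w) (2 * σ) +
        theta1 (z + w) (2 * σ) * theta1 (z - w) (2 * σ) := by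
  have hπ : (Real.pi : ℂ) ≠ 0 := ofReal_ne_zero.2 Real.pi_ne_zero
  simp only [theta1_eq_jacobiTheta₂, theta3_eq_jacobiTheta₂, theta4_eq_jacobiTheta₂]
  rw [jacobiTheta₂_mul _ _ hσ]
  have hexp : cexp (Real.pi * I * (σ + 2 * (z / Real.pi + 1 / 2))) =
      -(cexp (Real.pi * I * (2 * σ) / 4 + I * (z + w)) *
        cexp (Real.pi * I * (2 * σ) / 4 + I * (z - w))) := by
    rw [← Complex.exp_add, ← Complex.exp_add_pi_mul_I]
    congr 1
    field_simp
    ring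
  rw [hexp]
  ring_nf
  simp only [I_sq]
  ring

lemma theta4_sq (z : ℂ) {σ : ℂ} (hσ : 0 < σ.im) :
    theta4 z σ ^ 2 =
      theta3 0 (2 * σ) * theta3 (2 * z) (2 * σ) - theta2 0 (2 * σ) * theta2 (2 * z) (2 * σ) := by
  have hπ : (Real.pi : ℂ) ≠ 0 := ofReal_ne_zero.2 Real.pi_ne_zero
  simp only [theta2_eq_jacobiTheta₂, theta3_eq_jacobiTheta₂, theta4_eq_jacobiTheta₂]
  rw [sq, jacobiTheta₂_mul _ _ hσ,
    show z / (Real.pi : ℂ) + 1 / 2 + (z / Real.pi + 1 / 2) + σ =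
      2 * z / Real.pi + 2 * σ / 2 + 1 by ring,
    show z / (Real.pi : ℂ) + 1 / 2 + (z / Real.pi + 1 / 2) = 2 * z / Real.pi + 1 by ring,
    jacobiTheta₂_add_left, jacobiTheta₂_add_left]
  have hexp : cexp (Real.pi * I * (σ + 2 * (z / Real.pi + 1 / 2))) =
      -(cexp (Real.pi * I * (2 * σ) / 4 + I * 0) *
        cexp (Real.pi * I * (2 * σ) / 4 + I * (2 * z))) := by
    rw [← Complex.exp_add, ← Complex.exp_add_pi_mul_I]
    congr 1
    field_simp
    ring
  rw [hexp]
  ring_nf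

/-- Landen's transformation for `theta4`. -/
lemma theta3_mul_theta4_self (z : ℂ) {σ : ℂ} (hσ : 0 < σ.im) :
    theta3 z σ * theta4 z σ = theta4 (2 * z) (2 * σ) * theta4 0 (2 * σ) := by
  have h₁ := theta3_mul_theta4 z z hσ
  have h₂ := theta4_mul_theta3 z z hσ
  rw [sub_self, ← two_mul] at h₁ h₂
  linear_combination (h₁ + h₂) / 2

lemma theta4_zero_ne_zero_of_one_le_im {τ : ℂ} (hτ : 1 ≤ τ.im) : theta4 0 τ ≠ 0 := by
  intro h
  rw [theta4_zero_eq_jacobiTheta] at h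
  have him : (τ + 1).im = τ.im := by simp
  have hbound := norm_jacobiTheta_sub_one_le (τ := τ + 1) (by rw [him]; linarith)
  rw [h, zero_sub, norm_neg, norm_one, him] at hbound
  have hexp : Real.exp (-Real.pi * τ.im) < 1 / 3 := by
    rw [neg_mul, Real.exp_neg, inv_lt_comm₀ (Real.exp_pos _) (by norm_num)]
    have h₁ := Real.add_one_le_exp (Real.pi * τ.im)
    nlinarith [Real.pi_gt_three]
  rw [div_mul_eq_mul_div, le_div_iff₀ (by linarith)] at hbound
  linarith

lemma theta4_zero_ne_zero {τ : ℂ} (hτ : 0 < τ.im) : theta4 0 τ ≠ 0 := by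
  intro h
  have descent : ∀ n : ℕ, theta4 0 (2 ^ n * τ) = 0 := by
    intro n
    induction n with
    | zero => simpa using h
    | succ n ih =>
      have him : 0 < ((2 : ℂ) ^ n * τ).im := by
        have : ((2 : ℂ) ^ n * τ).im = 2 ^ n * τ.im := by
          exact_mod_cast im_ofReal_mul ((2 : ℝ) ^ n) τ
        rw [this]
        positivity
      have h₁ := theta3_mul_theta4_self 0 him
      rw [ih, mul_zero, mul_zero, ← mul_assoc, ← pow_succ'] at h₁
      exact mul_self_eq_zero.1 h₁.symm
  obtain ⟨n, hn⟩ := pow_unbounded_of_one_lt (1 / τ.im) (one_lt_two : (1 : ℝ) < 2)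
  refine theta4_zero_ne_zero_of_one_le_im ?_ (descent n)
  have : ((2 : ℂ) ^ n * τ).im = 2 ^ n * τ.im := by
    exact_mod_cast im_ofReal_mul ((2 : ℝ) ^ n) τ
  rw [this]
  exact ((div_lt_iff₀ hτ).1 hn).le

lemma theta2_zero_ne_zero {τ : ℂ} (hτ : 0 < τ.im) : theta2 0 τ ≠ 0 := by
  have hτ0 : τ ≠ 0 := by
    rintro rfl
    simp at hτ
  have him : 0 < (-1 / τ).im := by
    rw [neg_div, one_div, neg_im, inv_im, neg_div, neg_neg]
    exact div_pos hτ (normSq_pos.2 hτ0)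
  have h := theta4_zero_ne_zero him
  rw [theta4_eq_jacobiTheta₂, zero_div, zero_add] at h
  rw [theta2_eq_jacobiTheta₂, zero_div, zero_add, jacobiTheta₂_functional_equation,
    show τ / 2 / τ = 1 / 2 by field_simp]
  refine mul_ne_zero (Complex.exp_ne_zero _)
    (mul_ne_zero (mul_ne_zero (one_div_ne_zero ?_) (Complex.exp_ne_zero _)) h)
  rw [Ne, cpow_eq_zero_iff]
  simp [hτ0, I_ne_zero]

lemma ellMod_mul_ellSn_mul_ellSn {τ : ℂ} (hθ₂ : theta2 0 τ ≠ 0) (hθ₃ : theta3 0 τ ≠ 0)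
    (x y : ℂ) :
    ellMod τ * ellSn τ x * ellSn τ y =
      theta1 (x / theta3 0 τ ^ 2) τ * theta1 (y / theta3 0 τ ^ 2) τ /
        (theta4 (x / theta3 0 τ ^ 2) τ * theta4 (y / theta3 0 τ ^ 2) τ) := by
  unfold ellMod ellSn
  generalize theta4 (x / theta3 0 τ ^ 2) τ = c
  generalize theta4 (y / theta3 0 τ ^ 2) τ = d
  generalize theta1 (x / theta3 0 τ ^ 2) τ = a
  generalize theta1 (y / theta3 0 τ ^ 2) τ = b
  field_simp

lemma ellDn_sub_ellMod_mul_ellCn {τ : ℂ} (hθ₃ : theta3 0 τ ≠ 0) (x : ℂ) :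
    ellDn τ x - ellMod τ * ellCn τ x =
      theta4 0 τ / theta3 0 τ ^ 2 *
        ((theta3 0 τ * theta3 (x / theta3 0 τ ^ 2) τ -
          theta2 0 τ * theta2 (x / theta3 0 τ ^ 2) τ) / theta4 (x / theta3 0 τ ^ 2) τ) := by
  unfold ellMod ellDn ellCn
  generalize theta4 (x / theta3 0 τ ^ 2) τ = c
  generalize theta3 (x / theta3 0 τ ^ 2) τ = a
  generalize theta2 (x / theta3 0 τ ^ 2) τ = b
  field_simp

theorem sn_cn_dn_identity (τ : ℂ) (hτ : 0 < τ.im) (x y : ℂ)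
    (h1 : theta4 (x / theta3 0 τ ^ 2) τ ≠ 0)
    (h2 : theta4 (y / theta3 0 τ ^ 2) τ ≠ 0)
    (h3 : theta4 ((x + y) / theta3 0 τ ^ 2) τ ≠ 0)
    (h4 : theta4 ((x - y) / theta3 0 τ ^ 2) τ ≠ 0)
    (h5 : 1 - ellMod τ * ellSn τ x * ellSn τ y ≠ 0)
    (h6 : ellDn τ (x - y) - ellMod τ * ellCn τ (x - y) ≠ 0) :
    (1 + ellMod τ * ellSn τ x * ellSn τ y) / (1 - ellMod τ * ellSn τ x * ellSn τ y) =
      (ellDn τ (x + y) - ellMod τ * ellCn τ (x + y)) /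
        (ellDn τ (x - y) - ellMod τ * ellCn τ (x - y)) := by
  have hθ₂ := theta2_zero_ne_zero hτ
  have hθ₄ := theta4_zero_ne_zero hτ
  have hθ₃ : theta3 0 τ ≠ 0 := by
    intro h
    simp [ellDn, ellMod, h] at h6
  clear h5 h6
  rw [ellMod_mul_ellSn_mul_ellSn hθ₂ hθ₃, ellDn_sub_ellMod_mul_ellCn hθ₃,
    ellDn_sub_ellMod_mul_ellCn hθ₃]
  rw [add_div x y] at h3 ⊢
  rw [sub_div x y] at h4 ⊢
  generalize x / theta3 0 τ ^ 2 = a at *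
  generalize y / theta3 0 τ ^ 2 = b at *
  obtain ⟨σ, rfl⟩ : ∃ σ, τ = 2 * σ := ⟨τ / 2, by ring⟩
  obtain ⟨z, w, rfl, rfl⟩ : ∃ z w, a = z + w ∧ b = z - w :=
    ⟨(a + b) / 2, (a - b) / 2, by ring, by ring⟩
  have hσ : 0 < σ.im := by simpa using hτ
  rw [show z + w + (z - w) = 2 * z by ring] at h3 ⊢
  rw [show z + w - (z - w) = 2 * w by ring] at h4 ⊢
  have hminus := theta3_mul_theta4 z w hσ
  have hplus := theta4_mul_theta3 z w hσ
  have hz := theta3_mul_theta4_self z hσ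
  have hw := theta3_mul_theta4_self w hσ
  rw [← theta4_sq z hσ, ← theta4_sq w hσ]
  obtain ⟨hz₃, hz₄⟩ := mul_ne_zero_iff.1 (hz.trans_ne (mul_ne_zero h3 hθ₄))
  obtain ⟨hw₃, hw₄⟩ := mul_ne_zero_iff.1 (hw.trans_ne (mul_ne_zero h4 hθ₄))
  have h12 := mul_ne_zero h1 h2
  rw [one_add_div h12, one_sub_div h12, ← hplus, ← hminus, div_div_div_cancel_right₀ h12,
    mul_div_mul_left _ _ (div_ne_zero hθ₄ (pow_ne_zero 2 hθ₃)),
    div_div_div_eq, div_eq_div_iff (mul_ne_zero hz₃ hw₄) (mul_ne_zero h3 (pow_ne_zero 2 hw₄))]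
  refine mul_right_cancel₀ hθ₄ ?_
  linear_combination theta4 z σ * theta4 w σ ^ 2 * theta3 w σ * (-hz) +
    theta4 z σ ^ 2 * theta3 z σ * theta4 w σ * hw
end
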